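/- arXiv:2503.11506 — 2 statements merged into one kernel-verified Lean document; each statement's English description precedes it below -/
import Mathlib

section
/- Let k, n ≥ 1 and 0 < γ ≤ 1/2. Then π_k^γ(ℍ^n) = 0. Concretely: every map f : S^k → ℝ^{2n+1} (S^k the unit sphere in ℝ^{k+1}) which is γ-Hölder as a map into ℍ^n (d_K(f(x), f(y)) ≤ C·|x−y|^γ for some C and all x, y ∈ S^k) admits an extension F : B̄^{k+1} → ℝ^{2n+1} with F restricted to S^k equal to f and F γ-Hölder as a map into ℍ^n (d_K(F(x), F(y)) ≤ C'·|x−y|^γ for some C' and all x, y in the closed unit ball B̄^{k+1}). -/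
open Metric Set MeasureTheory Topology

/-- The index of the coordinate `x_j` in `ℝ^{2n+1}`. -/
def xI (n : ℕ) (j : Fin n) : Fin (2*n+1) := ⟨2*j.1, by have := j.2; omega⟩

/-- The index of the coordinate `y_j` in `ℝ^{2n+1}`. -/
def yI (n : ℕ) (j : Fin n) : Fin (2*n+1) := ⟨2*j.1+1, by have := j.2; omega⟩

/-- The index of the coordinate `t` in `ℝ^{2n+1}`. -/
def tI (n : ℕ) : Fin (2*n+1) := Fin.last (2*n)

/-- The Korányi metric on the Heisenberg group `ℍ^n = ℝ^{2n+1}`: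
`d_K(p,q) = (|z-z'|^4 + |t - t' + 2 ∑_j (x_j' y_j - x_j y_j')|^2)^{1/4}`. -/
noncomputable def dK (n : ℕ) (p q : EuclideanSpace ℝ (Fin (2*n+1))) : ℝ :=
  ((∑ i : Fin (2*n), (p (Fin.castSucc i) - q (Fin.castSucc i)) ^ 2) ^ 2 +
    (p (tI n) - q (tI n) +
      2 * ∑ j : Fin n, (q (xI n j) * p (yI n j) - p (xI n j) * q (yI n j))) ^ 2) ^ ((1:ℝ)/4)

/-!
The Heisenberg group carries the dilations `δ_r (z, t) = (r z, r² t)`, which multiply the Korányi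
distance by `r` and whose orbits `r ↦ δ_r p` on `[0, 1]` are `1/2`-Hölder, with a constant
proportional to the distance from `p` to the origin. Hence the cone `x ↦ δ_{‖x‖} (f (x / ‖x‖))`
over a `γ`-Hölder map `f` with `γ ≤ 1/2` is `γ`-Hölder: a radial displacement is controlled by the
orbits, and a displacement along the sphere of radius `s` by `s ≤ s ^ γ`.

The triangle inequality comes from writing `d_K(p, q)² = |A(p, q)|` for a complex-valued `A` that
is additive up to the term `2 ⟪z_p - z_q, z_q - z_r⟫`, to which Cauchy-Schwarz applies.
-/

open scoped InnerProductSpace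

section Cone

lemma isBounded_image_of_dist_le_mul_rpow {X Y : Type*} [PseudoMetricSpace X]
    [PseudoMetricSpace Y] {f : Y → X} {s : Set Y} (hs : Bornology.IsBounded s) {C γ : ℝ}
    (hγ : 0 ≤ γ) (hf : ∀ x ∈ s, ∀ y ∈ s, dist (f x) (f y) ≤ C * dist x y ^ γ) :
    Bornology.IsBounded (f '' s) := by
  obtain ⟨D, hD⟩ := isBounded_iff.1 hs
  refine isBounded_iff.2 ⟨|C| * D ^ γ, ?_⟩
  rintro _ ⟨x, hx, rfl⟩ _ ⟨y, hy, rfl⟩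
  calc dist (f x) (f y) ≤ C * dist x y ^ γ := hf x hx y hy
    _ ≤ |C| * D ^ γ := by
        gcongr
        exacts [le_abs_self C, hD hx hy]

variable {E : Type*} [NormedAddCommGroup E] [NormedSpace ℝ E]

lemma exists_mem_sphere_norm_smul_eq [Nontrivial E] (x : E) :
    ∃ u ∈ sphere (0 : E) 1, ‖x‖ • u = x := by
  rcases eq_or_ne x 0 with rfl | hx
  · obtain ⟨u, hu⟩ := NormedSpace.sphere_nonempty (x := (0 : E)).2 zero_le_one
    exact ⟨u, hu, by simp⟩
  · exact ⟨‖x‖⁻¹ • x, by simp [norm_smul, hx], by simp [smul_smul, hx]⟩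

lemma abs_sub_le_dist_smul_smul {r s : ℝ} (hr : 0 ≤ r) (hs : 0 ≤ s) {u v : E} (hu : ‖u‖ = 1)
    (hv : ‖v‖ = 1) : |r - s| ≤ dist (r • u) (s • v) := by
  simpa [norm_smul, hu, hv, abs_of_nonneg hr, abs_of_nonneg hs, dist_eq_norm] using
    abs_norm_sub_norm_le (r • u) (s • v)

lemma mul_dist_le_two_mul_dist_smul_smul {r s : ℝ} (hr : 0 ≤ r) (hs : 0 ≤ s) {u v : E}
    (hu : ‖u‖ = 1) (hv : ‖v‖ = 1) : s * dist u v ≤ 2 * dist (r • u) (s • v) :=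
  calc s * dist u v = dist (s • u) (s • v) := by rw [dist_smul₀, Real.norm_of_nonneg hs]
    _ ≤ dist (s • u) (r • u) + dist (r • u) (s • v) := dist_triangle _ _ _
    _ = |r - s| + dist (r • u) (s • v) := by
        rw [dist_eq_norm, ← sub_smul, norm_smul, hu, mul_one, Real.norm_eq_abs, abs_sub_comm]
    _ ≤ 2 * dist (r • u) (s • v) := by linarith [abs_sub_le_dist_smul_smul hr hs hu hv]

lemma mul_rpow_dist_le_rpow_dist_smul_smul {r s γ : ℝ} (hr : 0 ≤ r) (hs : s ∈ Icc 0 1)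
    (hγ₀ : 0 ≤ γ) (hγ₁ : γ ≤ 1) {u v : E} (hu : ‖u‖ = 1) (hv : ‖v‖ = 1) :
    s * dist u v ^ γ ≤ 2 ^ γ * dist (r • u) (s • v) ^ γ :=
  calc s * dist u v ^ γ ≤ s ^ γ * dist u v ^ γ := by
        gcongr
        simpa using Real.rpow_le_rpow_of_exponent_ge' hs.1 hs.2 hγ₀ hγ₁
    _ = (s * dist u v) ^ γ := (Real.mul_rpow hs.1 dist_nonneg).symm
    _ ≤ (2 * dist (r • u) (s • v)) ^ γ :=
        Real.rpow_le_rpow (mul_nonneg hs.1 dist_nonneg)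
          (mul_dist_le_two_mul_dist_smul_smul hr hs.1 hu hv) hγ₀
    _ = 2 ^ γ * dist (r • u) (s • v) ^ γ := Real.mul_rpow zero_le_two dist_nonneg

lemma rpow_abs_sub_le_rpow_dist_smul_smul {r s α γ : ℝ} (hr : r ∈ Icc 0 1)
    (hs : s ∈ Icc 0 1) (hγ : 0 ≤ γ) (hγα : γ ≤ α) {u v : E} (hu : ‖u‖ = 1) (hv : ‖v‖ = 1) :
    |r - s| ^ α ≤ dist (r • u) (s • v) ^ γ :=
  calc |r - s| ^ α ≤ |r - s| ^ γ :=
        Real.rpow_le_rpow_of_exponent_ge' (abs_nonneg _)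
          (by simpa using abs_sub_le_of_le_of_le hr.1 hr.2 hs.1 hs.2) hγ hγα
    _ ≤ dist (r • u) (s • v) ^ γ := by
        gcongr
        exact abs_sub_le_dist_smul_smul hr.1 hs.1 hu hv

variable {X : Type*} [PseudoMetricSpace X]

/-- A family of maps `δ r`, `r ∈ [0, 1]`, starting at the identity for `r = 1` and scaling
distances by at most `r`, whose orbits are `α`-Hölder in `r` with a constant that grows linearly in
the distance to the base point `o`. The values `δ r` for `r ∉ [0, 1]` are irrelevant. -/
structure IsHolderDilation (δ : ℝ → X → X) (o : X) (B α : ℝ) : Prop where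
  one_apply (p : X) : δ 1 p = p
  dist_le {r : ℝ} (hr : r ∈ Icc 0 1) (p q : X) : dist (δ r p) (δ r q) ≤ r * dist p q
  dist_orbit_le {r s : ℝ} (hr : r ∈ Icc 0 1) (hs : s ∈ Icc 0 1) (p : X) :
    dist (δ r p) (δ s p) ≤ B * dist p o * |r - s| ^ α

lemma IsHolderDilation.dist_cone_le {δ : ℝ → X → X} {o : X} {B α : ℝ}
    (hδ : IsHolderDilation δ o B α) {γ : ℝ} (hγ₀ : 0 ≤ γ) (hγ₁ : γ ≤ 1) (hγα : γ ≤ α)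
    {p q : X} {C D : ℝ} {u v : E} (hu : ‖u‖ = 1) (hv : ‖v‖ = 1)
    (hpq : dist p q ≤ C * dist u v ^ γ) (hp : dist p o ≤ D) {r s : ℝ}
    (hr : r ∈ Icc 0 1) (hs : s ∈ Icc 0 1) :
    dist (δ r p) (δ s q) ≤ (|B| * D + |C| * 2 ^ γ) * dist (r • u) (s • v) ^ γ := by
  have radial : dist (δ r p) (δ s p) ≤ |B| * D * dist (r • u) (s • v) ^ γ :=
    calc dist (δ r p) (δ s p) ≤ B * dist p o * |r - s| ^ α := hδ.dist_orbit_le hr hs p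
      _ ≤ |B| * D * dist (r • u) (s • v) ^ γ := by
          have hD : 0 ≤ D := dist_nonneg.trans hp
          gcongr
          exacts [le_abs_self B, rpow_abs_sub_le_rpow_dist_smul_smul hr hs hγ₀ hγα hu hv]
  have spherical : dist (δ s p) (δ s q) ≤ |C| * 2 ^ γ * dist (r • u) (s • v) ^ γ :=
    calc dist (δ s p) (δ s q) ≤ s * dist p q := hδ.dist_le hs p q
      _ ≤ s * (|C| * dist u v ^ γ) := by
          have := hs.1
          gcongr
          exact hpq.trans (by gcongr; exact le_abs_self C)
      _ = |C| * (s * dist u v ^ γ) := by ring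
      _ ≤ |C| * (2 ^ γ * dist (r • u) (s • v) ^ γ) := by
          gcongr ?_ * ?_
          exact mul_rpow_dist_le_rpow_dist_smul_smul hr.1 hs hγ₀ hγ₁ hu hv
      _ = |C| * 2 ^ γ * dist (r • u) (s • v) ^ γ := by ring
  linarith [dist_triangle (δ r p) (δ s p) (δ s q)]

theorem IsHolderDilation.exists_holder_extension {δ : ℝ → X → X} {o : X} {B α : ℝ}
    (hδ : IsHolderDilation δ o B α) {γ : ℝ} (hγ₀ : 0 ≤ γ) (hγ₁ : γ ≤ 1) (hγα : γ ≤ α)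
    (f : E → X)
    (hf : ∃ C : ℝ, ∀ x ∈ sphere (0 : E) 1, ∀ y ∈ sphere (0 : E) 1,
      dist (f x) (f y) ≤ C * dist x y ^ γ) :
    ∃ F : E → X, (∀ x ∈ sphere (0 : E) 1, F x = f x) ∧
      ∃ C' : ℝ, ∀ x ∈ closedBall (0 : E) 1, ∀ y ∈ closedBall (0 : E) 1,
        dist (F x) (F y) ≤ C' * dist x y ^ γ := by
  rcases subsingleton_or_nontrivial E with hE | hE
  · exact ⟨f, fun _ _ => rfl, 0, fun x _ y _ => by simp [Subsingleton.elim x y]⟩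
  obtain ⟨C, hC⟩ := hf
  obtain ⟨D, hD⟩ :=
    (isBounded_image_of_dist_le_mul_rpow isBounded_sphere hγ₀ hC).subset_closedBall o
  choose dir hdir hsmul using exists_mem_sphere_norm_smul_eq (E := E)
  have norm_dir (x : E) : ‖dir x‖ = 1 := mem_sphere_zero_iff_norm.1 (hdir x)
  refine ⟨fun x => δ ‖x‖ (f (dir x)), fun x hx => ?_,
    |B| * D + |C| * 2 ^ γ, fun x hx y hy => ?_⟩
  · have hx1 : ‖x‖ = 1 := mem_sphere_zero_iff_norm.1 hx
    have hdirx : dir x = x := by simpa [hx1] using hsmul x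
    simp only [hx1, hdirx, hδ.one_apply]
  · simpa only [hsmul] using
      hδ.dist_cone_le hγ₀ hγ₁ hγα (norm_dir x) (norm_dir y) (hC _ (hdir x) _ (hdir y))
        (hD (mem_image_of_mem f (hdir x))) ⟨norm_nonneg x, mem_closedBall_zero_iff.1 hx⟩
        ⟨norm_nonneg y, mem_closedBall_zero_iff.1 hy⟩

end Cone

section Koranyi

lemma im_inner_sub_sub {V : Type*} [SeminormedAddCommGroup V] [InnerProductSpace ℂ V] (x y z : V) :
    (⟪x - y, y - z⟫_ℂ).im = (⟪z, x⟫_ℂ).im - (⟪y, x⟫_ℂ).im - (⟪z, y⟫_ℂ).im := by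
  have im_symm (v w : V) : (⟪v, w⟫_ℂ).im = -(⟪w, v⟫_ℂ).im := inner_im_symm (𝕜 := ℂ) v w
  have im_self : (⟪y, y⟫_ℂ).im = 0 := inner_self_im (𝕜 := ℂ) y
  simp only [inner_sub_left, inner_sub_right, Complex.sub_im, im_self]
  rw [im_symm x y, im_symm x z, im_symm y z]
  ring

variable {n : ℕ}

lemma xI_ne_tI (j : Fin n) : xI n j ≠ tI n := by
  simp only [xI, tI, ne_eq, Fin.ext_iff, Fin.val_last]
  omega

lemma yI_ne_tI (j : Fin n) : yI n j ≠ tI n := by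
  simp only [yI, tI, ne_eq, Fin.ext_iff, Fin.val_last]
  omega

lemma eq_xI_or_eq_yI_or_eq_tI (i : Fin (2 * n + 1)) :
    (∃ j, i = xI n j) ∨ (∃ j, i = yI n j) ∨ i = tI n := by
  rcases Fin.eq_castSucc_or_eq_last i with ⟨i, rfl⟩ | rfl
  · obtain ⟨j, hj | hj⟩ := i.val.even_or_odd'
    · exact .inl ⟨⟨j, by omega⟩, Fin.ext hj⟩
    · exact .inr (.inl ⟨⟨j, by omega⟩, Fin.ext hj⟩)
  · exact .inr (.inr rfl)

lemma sum_castSucc_eq_sum_xI_add_yI {M : Type*} [AddCommMonoid M] (g : Fin (2 * n + 1) → M) :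
    ∑ i : Fin (2 * n), g i.castSucc = ∑ j : Fin n, (g (xI n j) + g (yI n j)) := by
  rw [← (finProdFinEquiv.trans (finCongr (mul_comm n 2))).sum_comp, Fintype.sum_prod_type]
  refine Finset.sum_congr rfl fun j _ => ?_
  rw [Fin.sum_univ_two]
  congr 2 <;> ext <;> simp [xI, yI]; ring

/-- The horizontal part `z = (x_j + i y_j)_j ∈ ℂ^n` of a point of `ℍ^n`. -/
noncomputable def horizontal (p : EuclideanSpace ℝ (Fin (2 * n + 1))) : EuclideanSpace ℂ (Fin n) :=
  WithLp.toLp 2 fun j => ⟨p (xI n j), p (yI n j)⟩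

/-- The complex number `|z - z'|² + i (t - t' + 2 Im ⟪z', z⟫)`, whose modulus is the square of the
Korányi distance. -/
noncomputable def koranyiForm (p q : EuclideanSpace ℝ (Fin (2 * n + 1))) : ℂ :=
  ⟨‖horizontal p - horizontal q‖ ^ 2,
    p (tI n) - q (tI n) + 2 * (⟪horizontal q, horizontal p⟫_ℂ).im⟩

variable (p q r : EuclideanSpace ℝ (Fin (2 * n + 1)))

lemma norm_horizontal_sub_sq :
    ‖horizontal p - horizontal q‖ ^ 2 = ∑ i : Fin (2 * n), (p i.castSucc - q i.castSucc) ^ 2 := by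
  rw [sum_castSucc_eq_sum_xI_add_yI (fun i => (p i - q i) ^ 2), EuclideanSpace.norm_sq_eq]
  refine Finset.sum_congr rfl fun j _ => ?_
  rw [Complex.sq_norm, Complex.normSq_apply]
  simp only [horizontal, PiLp.sub_apply, Complex.sub_re, Complex.sub_im, sq]

lemma im_inner_horizontal :
    (⟪horizontal q, horizontal p⟫_ℂ).im =
      ∑ j : Fin n, (q (xI n j) * p (yI n j) - p (xI n j) * q (yI n j)) := by
  rw [PiLp.inner_apply, Complex.im_sum]
  refine Finset.sum_congr rfl fun j _ => ?_
  simp only [horizontal, RCLike.inner_apply, Complex.mul_im, Complex.conj_re, Complex.conj_im]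
  ring

lemma dK_eq_sqrt_norm_koranyiForm : dK n p q = √‖koranyiForm p q‖ := by
  rw [dK, Complex.norm_eq_sqrt_sq_add_sq, koranyiForm, norm_horizontal_sub_sq,
    im_inner_horizontal, Real.sqrt_eq_rpow, Real.sqrt_eq_rpow, ← Real.rpow_mul (by positivity)]
  norm_num

lemma koranyiForm_self : koranyiForm p p = 0 := by
  have him : (⟪horizontal p, horizontal p⟫_ℂ).im = 0 := inner_self_im (𝕜 := ℂ) _
  simp only [koranyiForm, sub_self, norm_zero, him]
  norm_num [Complex.ext_iff]

lemma koranyiForm_comm : koranyiForm q p = starRingEnd ℂ (koranyiForm p q) := by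
  have him : (⟪horizontal p, horizontal q⟫_ℂ).im = -(⟪horizontal q, horizontal p⟫_ℂ).im :=
    inner_im_symm (𝕜 := ℂ) _ _
  apply Complex.ext
  · simp only [koranyiForm, Complex.conj_re, norm_sub_rev]
  · simp only [koranyiForm, him, Complex.conj_im]
    ring

lemma koranyiForm_eq_add :
    koranyiForm p r = koranyiForm p q + koranyiForm q r +
      2 * ⟪horizontal p - horizontal q, horizontal q - horizontal r⟫_ℂ := by
  apply Complex.ext
  · have hnorm := norm_add_sq (𝕜 := ℂ) (horizontal p - horizontal q) (horizontal q - horizontal r)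
    rw [sub_add_sub_cancel, RCLike.re_eq_complex_re] at hnorm
    simp only [koranyiForm, hnorm, Complex.add_re, Complex.mul_re, Complex.re_ofNat,
      Complex.im_ofNat]
    ring
  · simp only [koranyiForm, Complex.add_im, Complex.mul_im, Complex.re_ofNat, Complex.im_ofNat,
      im_inner_sub_sub]
    ring

lemma norm_horizontal_sub_le_dK : ‖horizontal p - horizontal q‖ ≤ dK n p q := by
  rw [dK_eq_sqrt_norm_koranyiForm]
  exact Real.le_sqrt_of_sq_le ((le_abs_self _).trans (Complex.abs_re_le_norm (koranyiForm p q)))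

lemma dK_nonneg : 0 ≤ dK n p q := by
  rw [dK_eq_sqrt_norm_koranyiForm]
  positivity

lemma dK_sq : dK n p q ^ 2 = ‖koranyiForm p q‖ := by
  rw [dK_eq_sqrt_norm_koranyiForm, Real.sq_sqrt (norm_nonneg _)]

lemma dK_self : dK n p p = 0 := by
  rw [dK_eq_sqrt_norm_koranyiForm, koranyiForm_self, norm_zero, Real.sqrt_zero]

lemma dK_comm : dK n p q = dK n q p := by
  rw [dK_eq_sqrt_norm_koranyiForm, dK_eq_sqrt_norm_koranyiForm, koranyiForm_comm, RCLike.norm_conj]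

lemma dK_triangle : dK n p r ≤ dK n p q + dK n q r := by
  refine (sq_le_sq₀ (dK_nonneg p r) (add_nonneg (dK_nonneg p q) (dK_nonneg q r))).1 ?_
  have cauchy_schwarz :
      ‖⟪horizontal p - horizontal q, horizontal q - horizontal r⟫_ℂ‖ ≤ dK n p q * dK n q r :=
    (norm_inner_le_norm _ _).trans <|
      mul_le_mul (norm_horizontal_sub_le_dK p q) (norm_horizontal_sub_le_dK q r) (norm_nonneg _)
        (dK_nonneg p q)
  calc dK n p r ^ 2 = ‖koranyiForm p q + koranyiForm q r +
        2 * ⟪horizontal p - horizontal q, horizontal q - horizontal r⟫_ℂ‖ := by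
        rw [dK_sq, koranyiForm_eq_add p q r]
    _ ≤ ‖koranyiForm p q‖ + ‖koranyiForm q r‖ +
        2 * ‖⟪horizontal p - horizontal q, horizontal q - horizontal r⟫_ℂ‖ := by
        refine norm_add₃_le.trans_eq ?_
        rw [norm_mul, Complex.norm_two]
    _ ≤ dK n p q ^ 2 + dK n q r ^ 2 + 2 * (dK n p q * dK n q r) := by
        rw [dK_sq, dK_sq]
        gcongr
    _ = (dK n p q + dK n q r) ^ 2 := by ring

variable {p q} in
lemma eq_of_dK_eq_zero (h : dK n p q = 0) : p = q := by
  have hA : koranyiForm p q = 0 := by rw [← norm_eq_zero, ← dK_sq, h, zero_pow two_ne_zero]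
  have hz : horizontal p = horizontal q := by
    simpa [koranyiForm, sub_eq_zero] using congrArg Complex.re hA
  have ht : p (tI n) = q (tI n) := by
    have him : (⟪horizontal q, horizontal q⟫_ℂ).im = 0 := inner_self_im (𝕜 := ℂ) _
    simpa only [koranyiForm, hz, him, mul_zero, add_zero, Complex.zero_im, sub_eq_zero] using
      congrArg Complex.im hA
  ext i
  rcases eq_xI_or_eq_yI_or_eq_tI i with ⟨j, rfl⟩ | ⟨j, rfl⟩ | rfl
  · simpa [horizontal] using congrArg (fun z => (z j).re) hz
  · simpa [horizontal] using congrArg (fun z => (z j).im) hz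
  · exact ht

/-- The Heisenberg group `ℍ^n`: a type synonym of `ℝ^{2n+1}` that carries the Korányi metric instead
of the Euclidean one. -/
def Heisenberg (n : ℕ) : Type := EuclideanSpace ℝ (Fin (2 * n + 1))

noncomputable instance Heisenberg.instMetricSpace : MetricSpace (Heisenberg n) where
  dist := dK n
  dist_self := dK_self
  dist_comm := dK_comm
  dist_triangle := dK_triangle
  eq_of_dist_eq_zero := eq_of_dK_eq_zero

/-- The dilation `(z, t) ↦ (r z, r² t)` of `ℍ^n`. -/
noncomputable def heisenbergDilation (r : ℝ) (p : EuclideanSpace ℝ (Fin (2 * n + 1))) :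
    EuclideanSpace ℝ (Fin (2 * n + 1)) :=
  WithLp.toLp 2 fun i => if i = tI n then r ^ 2 * p i else r * p i

lemma horizontal_heisenbergDilation (a : ℝ) :
    horizontal (heisenbergDilation a p) = (a : ℂ) • horizontal p := by
  ext j
  apply Complex.ext <;> simp [horizontal, heisenbergDilation, xI_ne_tI, yI_ne_tI]

lemma heisenbergDilation_apply_tI (a : ℝ) :
    heisenbergDilation a p (tI n) = a ^ 2 * p (tI n) := by
  simp [heisenbergDilation]

lemma heisenbergDilation_one : heisenbergDilation 1 p = p := by
  ext i
  simp [heisenbergDilation]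

lemma im_inner_horizontal_heisenbergDilation (a b : ℝ) :
    (⟪horizontal (heisenbergDilation b q), horizontal (heisenbergDilation a p)⟫_ℂ).im =
      a * b * (⟪horizontal q, horizontal p⟫_ℂ).im := by
  rw [horizontal_heisenbergDilation, horizontal_heisenbergDilation, inner_smul_left,
    inner_smul_right, Complex.conj_ofReal, Complex.im_ofReal_mul, Complex.im_ofReal_mul]
  ring

lemma koranyiForm_heisenbergDilation (a : ℝ) :
    koranyiForm (heisenbergDilation a p) (heisenbergDilation a q) = a ^ 2 * koranyiForm p q := by
  rw [← Complex.ofReal_pow]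
  apply Complex.ext
  · simp only [koranyiForm, horizontal_heisenbergDilation, ← smul_sub, norm_smul, mul_pow,
      Complex.norm_real, Real.norm_eq_abs, sq_abs, Complex.re_ofReal_mul]
  · simp only [koranyiForm, im_inner_horizontal_heisenbergDilation, heisenbergDilation_apply_tI,
      Complex.im_ofReal_mul]
    ring

lemma koranyiForm_zero_right : koranyiForm p 0 = ⟨‖horizontal p‖ ^ 2, p (tI n)⟩ := by
  have hzero : horizontal (0 : EuclideanSpace ℝ (Fin (2 * n + 1))) = 0 := by
    ext j
    apply Complex.ext <;> simp [horizontal]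
  simp [koranyiForm, hzero]

lemma koranyiForm_heisenbergDilation_orbit (a b : ℝ) :
    koranyiForm (heisenbergDilation a p) (heisenbergDilation b p) =
      (a - b : ℝ) * (a * koranyiForm p 0 - b * koranyiForm 0 p) := by
  have him : (⟪horizontal p, horizontal p⟫_ℂ).im = 0 := inner_self_im (𝕜 := ℂ) _
  rw [koranyiForm_comm p 0, koranyiForm_zero_right]
  apply Complex.ext
  · simp only [koranyiForm, horizontal_heisenbergDilation, ← sub_smul, ← Complex.ofReal_sub,
      norm_smul, mul_pow, Complex.norm_real, Real.norm_eq_abs, sq_abs, Complex.re_ofReal_mul,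
      Complex.sub_re, Complex.conj_re]
    ring
  · simp only [koranyiForm, im_inner_horizontal_heisenbergDilation, heisenbergDilation_apply_tI,
      him, Complex.im_ofReal_mul, Complex.sub_im, Complex.conj_im]
    ring

lemma dK_heisenbergDilation {a : ℝ} (ha : 0 ≤ a) :
    dK n (heisenbergDilation a p) (heisenbergDilation a q) = a * dK n p q := by
  rw [dK_eq_sqrt_norm_koranyiForm, dK_eq_sqrt_norm_koranyiForm, koranyiForm_heisenbergDilation,
    norm_mul, norm_pow, Complex.norm_of_nonneg ha, Real.sqrt_mul (sq_nonneg a), Real.sqrt_sq ha]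

lemma dK_heisenbergDilation_orbit_le {a b : ℝ} (ha : a ∈ Icc 0 1) (hb : b ∈ Icc 0 1) :
    dK n (heisenbergDilation a p) (heisenbergDilation b p) ≤
      √2 * dK n p 0 * |a - b| ^ (1 / 2 : ℝ) := by
  have hnorm : ‖a * koranyiForm p 0 - b * koranyiForm 0 p‖ ≤ 2 * ‖koranyiForm p 0‖ :=
    calc ‖a * koranyiForm p 0 - b * koranyiForm 0 p‖
        ≤ ‖a * koranyiForm p 0‖ + ‖b * koranyiForm 0 p‖ := norm_sub_le _ _
      _ = (a + b) * ‖koranyiForm p 0‖ := by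
          rw [norm_mul, norm_mul, Complex.norm_of_nonneg ha.1, Complex.norm_of_nonneg hb.1,
            koranyiForm_comm p 0, RCLike.norm_conj, add_mul]
      _ ≤ 2 * ‖koranyiForm p 0‖ := by
          gcongr
          linarith [ha.2, hb.2]
  rw [dK_eq_sqrt_norm_koranyiForm, dK_eq_sqrt_norm_koranyiForm, ← Real.sqrt_eq_rpow,
    koranyiForm_heisenbergDilation_orbit, ← Real.sqrt_mul zero_le_two,
    ← Real.sqrt_mul (by positivity), norm_mul, Complex.norm_real, Real.norm_eq_abs, mul_comm]
  gcongr

lemma isHolderDilation_heisenbergDilation :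
    IsHolderDilation (X := Heisenberg n) heisenbergDilation
      (0 : EuclideanSpace ℝ (Fin (2 * n + 1))) (√2) (1 / 2) where
  one_apply := heisenbergDilation_one
  dist_le hr p q := (dK_heisenbergDilation p q hr.1).le
  dist_orbit_le hr hs p := dK_heisenbergDilation_orbit_le p hr hs

end Koranyi

theorem stmt5_general {E : Type*} [NormedAddCommGroup E] [NormedSpace ℝ E] {n : ℕ} {γ : ℝ}
    (hγ₀ : 0 ≤ γ) (hγ₁ : γ ≤ 1 / 2) (f : E → EuclideanSpace ℝ (Fin (2 * n + 1)))
    (hf : ∃ C : ℝ, ∀ x ∈ sphere (0 : E) 1, ∀ y ∈ sphere (0 : E) 1,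
      dK n (f x) (f y) ≤ C * dist x y ^ γ) :
    ∃ F : E → EuclideanSpace ℝ (Fin (2 * n + 1)), (∀ x ∈ sphere (0 : E) 1, F x = f x) ∧
      ∃ C' : ℝ, ∀ x ∈ closedBall (0 : E) 1, ∀ y ∈ closedBall (0 : E) 1,
        dK n (F x) (F y) ≤ C' * dist x y ^ γ :=
  isHolderDilation_heisenbergDilation.exists_holder_extension hγ₀ (by linarith) hγ₁ f hf

/-- For `k, n ≥ 1` and `0 < γ ≤ 1/2` one has `π_k^γ(ℍ^n) = 0`: every map
`f : S^k → ℝ^{2n+1}` which is `γ`-Hölder into `ℍ^n` admits a `γ`-Hölder (into `ℍ^n`)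
extension `F : B̄^{k+1} → ℝ^{2n+1}`. -/
theorem stmt5 (k n : ℕ) (hk : 1 ≤ k) (hn : 1 ≤ n) (γ : ℝ) (hγ0 : 0 < γ) (hγ1 : γ ≤ 1/2)
    (f : EuclideanSpace ℝ (Fin (k+1)) → EuclideanSpace ℝ (Fin (2*n+1)))
    (hf : ∃ C : ℝ, ∀ x ∈ sphere (0 : EuclideanSpace ℝ (Fin (k+1))) 1,
        ∀ y ∈ sphere (0 : EuclideanSpace ℝ (Fin (k+1))) 1,
        dK n (f x) (f y) ≤ C * dist x y ^ γ) :
    ∃ F : EuclideanSpace ℝ (Fin (k+1)) → EuclideanSpace ℝ (Fin (2*n+1)),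
      (∀ x ∈ sphere (0 : EuclideanSpace ℝ (Fin (k+1))) 1, F x = f x) ∧
      ∃ C' : ℝ, ∀ x ∈ closedBall (0 : EuclideanSpace ℝ (Fin (k+1))) 1,
          ∀ y ∈ closedBall (0 : EuclideanSpace ℝ (Fin (k+1))) 1,
          dK n (F x) (F y) ≤ C' * dist x y ^ γ := by
  exact stmt5_general hγ0.le hγ1 f hf
end

section
/- Let Ω ⊆ ℝ^m be open, let f : Ω → ℝ^{2n+1} be continuous, and let 1/2 < γ ≤ 1. Then f is locally γ-Hölder continuous as a map into ℍ^n (with respect to the Korányi metric) if and only if both of the following hold: (a) the map π∘f : Ω → ℝ^{2n} given by the first 2n components of f is locally γ-Hölder continuous with respect to the Euclidean metrics; and (b) for every compact set K ⊆ Ω, sup_{p ∈ K} |(f_ε^*α)(p)| → 0 as ε → 0+, where f_ε = f * η_ε is the standard ε-mollification of f (defined on K for all ε smaller than the distance from K to the complement of Ω). -/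
open Metric Set MeasureTheory Topology

/-- The Euclidean distance between the projections of `p, q ∈ ℝ^{2n+1}` onto the first
`2n` coordinates. -/
noncomputable def edistProj (n : ℕ) (p q : EuclideanSpace ℝ (Fin (2*n+1))) : ℝ :=
  Real.sqrt (∑ i : Fin (2*n), (p (Fin.castSucc i) - q (Fin.castSucc i)) ^ 2)

/-- The `ε`-mollification `f_ε = f * η_ε` of `f`, where `η_ε(z) = ε^{-m} η(z/ε)`. -/
noncomputable def mollify (m d : ℕ) (η : EuclideanSpace ℝ (Fin m) → ℝ) (ε : ℝ)
    (f : EuclideanSpace ℝ (Fin m) → EuclideanSpace ℝ (Fin d))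
    (p : EuclideanSpace ℝ (Fin m)) : EuclideanSpace ℝ (Fin d) :=
  ∫ z, ((ε ^ m)⁻¹ * η (ε⁻¹ • z)) • f (p - z)

/-- The pullback `g^*α` of the standard contact form
`α = dt + 2 ∑_j (x_j dy_j - y_j dx_j)`, identified with the `ℝ^m`-valued map
`g^*α(p) = ∇g^t(p) + 2 ∑_j (g^{x_j}(p)·∇g^{y_j}(p) - g^{y_j}(p)·∇g^{x_j}(p))`. -/
noncomputable def pullA (n m : ℕ)
    (g : EuclideanSpace ℝ (Fin m) → EuclideanSpace ℝ (Fin (2*n+1)))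
    (p : EuclideanSpace ℝ (Fin m)) : EuclideanSpace ℝ (Fin m) :=
  gradient (fun q => g q (tI n)) p +
    (2:ℝ) • ∑ j : Fin n,
      (g p (xI n j) • gradient (fun q => g q (yI n j)) p -
        g p (yI n j) • gradient (fun q => g q (xI n j)) p)

/-!
The statement is local, and composing `f` with the nearest-point retraction onto a small closed
ball, which is `1`-Lipschitz, replaces `f` by a map `g` that is continuous and satisfies its Hölder
bound on the whole space. Write `φ_g(x, y) = α_{g y}(g x - g y)`, the `t`-coordinate of
`(g y)⁻¹ * g x`; the Korányi distance of `g x` and `g y` is comparable to the horizontal distance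
plus `√|φ_g(x, y)|`.

If `g` is `γ`-Hölder into `ℍ^n`, then on an `ε`-ball around `p` the horizontal increments are
`O(ε^γ)` and `φ_g(·, p)` is `O(ε^{2γ})`. As `∇η_ε` has mean zero and `L^1` norm `O(1/ε)`, this
gives `g_ε^*α = O(ε^{2γ-1})`.

Conversely, `φ = φ_{g_ε}` is additive under bisection of the segment from `x` to `y` up to an error
`O(d(x, y)^{2γ})`, uniformly in `ε`, because the horizontal part of `g_ε` inherits the Hölder bound
of `g`. The mean value inequality also gives `|φ(x, y)| ≤ δ d(x, y) + A_ε d(x, y)^{1+γ}`, where `δ`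
bounds `g_ε^*α`. Dyadic subdivision removes the constant `A_ε`, which blows up as `ε → 0`, and since
`2γ > 1` the bisection errors sum to `O(d(x, y)^{2γ})`. Letting `ε → 0`, hence `δ → 0`, yields
`φ_g(x, y) = O(d(x, y)^{2γ})`.
-/

open Filter
open scoped Convolution

section MetricProjection

variable {E : Type*} [NormedAddCommGroup E] [InnerProductSpace ℝ E]

lemma exists_lipschitzWith_one_retraction {K : Set E} (hne : K.Nonempty) (hK : IsComplete K)
    (hconv : Convex ℝ K) :
    ∃ ρ : E → E, LipschitzWith 1 ρ ∧ (∀ x, ρ x ∈ K) ∧ EqOn ρ id K := by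
  choose ρ hρK hρ using exists_norm_eq_iInf_of_complete_convex hne hK hconv
  have hobtuse : ∀ x, ∀ w ∈ K, inner ℝ (x - ρ x) (w - ρ x) ≤ 0 := fun x =>
    (norm_eq_iInf_iff_real_inner_le_zero hconv (hρK x)).1 (hρ x)
  refine ⟨ρ, LipschitzWith.of_dist_le_mul fun x y => ?_, hρK, fun x hx => ?_⟩
  · have hsq : ‖ρ x - ρ y‖ ^ 2 ≤ ‖x - y‖ * ‖ρ x - ρ y‖ := by
      calc ‖ρ x - ρ y‖ ^ 2
          = inner ℝ (x - y) (ρ x - ρ y) + inner ℝ (x - ρ x) (ρ y - ρ x) +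
              inner ℝ (y - ρ y) (ρ x - ρ y) := by
            rw [← real_inner_self_eq_norm_sq, ← neg_sub (ρ x) (ρ y), inner_neg_right,
              ← sub_eq_add_neg, ← inner_sub_left, ← inner_add_left]
            congr 1
            abel
        _ ≤ inner ℝ (x - y) (ρ x - ρ y) := by
            linarith [hobtuse x _ (hρK y), hobtuse y _ (hρK x)]
        _ ≤ ‖x - y‖ * ‖ρ x - ρ y‖ := real_inner_le_norm _ _
    rw [NNReal.coe_one, one_mul, dist_eq_norm, dist_eq_norm]
    rcases (norm_nonneg (ρ x - ρ y)).eq_or_lt with h | h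
    · exact h ▸ norm_nonneg _
    · exact le_of_mul_le_mul_right (by rwa [← sq]) h
  · have h := hobtuse x x hx
    rw [real_inner_self_nonpos, sub_eq_zero] at h
    exact h.symm

end MetricProjection

section LocalHolder

/-- `f` is locally `γ`-Hölder on `Ω` with respect to the two-point function `D` on its target. The
function `D` need not be a metric, so that this covers both the Korányi metric and the distance
between horizontal projections. -/
def LocallyHolderOn {X F : Type*} [PseudoMetricSpace X] (D : F → F → ℝ) (γ : ℝ) (f : X → F)
    (Ω : Set X) : Prop :=
  ∀ p ∈ Ω, ∃ r : ℝ, 0 < r ∧ ∃ C : ℝ, ∀ x ∈ ball p r ∩ Ω, ∀ y ∈ ball p r ∩ Ω,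
    D (f x) (f y) ≤ C * dist x y ^ γ

lemma LocallyHolderOn.mono_dist {X F : Type*} [PseudoMetricSpace X] {D D' : F → F → ℝ} {γ : ℝ}
    {f : X → F} {Ω : Set X} (h : LocallyHolderOn D γ f Ω) (hD : ∀ a b, D' a b ≤ D a b) :
    LocallyHolderOn D' γ f Ω := fun p hp =>
  let ⟨r, hr, C, hC⟩ := h p hp
  ⟨r, hr, C, fun x hx y hy => (hD _ _).trans (hC x hx y hy)⟩

lemma LocallyHolderOn.exists_continuous_extension {E F : Type*} [NormedAddCommGroup E]
    [InnerProductSpace ℝ E] [CompleteSpace E] [TopologicalSpace F] {D : F → F → ℝ} {γ : ℝ}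
    {f : E → F} {Ω : Set E} (h : LocallyHolderOn D γ f Ω) (hγ : 0 ≤ γ) (hΩ : IsOpen Ω)
    (hf : ContinuousOn f Ω) {p : E} (hp : p ∈ Ω) :
    ∃ R > 0, ∃ C ≥ 0, ∃ g : E → F, closedBall p R ⊆ Ω ∧ EqOn f g (closedBall p R) ∧
      Continuous g ∧ ∀ x y, D (g x) (g y) ≤ C * dist x y ^ γ := by
  obtain ⟨r, hr, C, hC⟩ := h p hp
  obtain ⟨R, hR, hRsub⟩ := nhds_basis_closedBall.mem_iff.1
    (inter_mem (ball_mem_nhds p hr) (hΩ.mem_nhds hp))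
  obtain ⟨ρ, hρ, hρmem, hρid⟩ := exists_lipschitzWith_one_retraction
    (nonempty_closedBall.2 hR.le) isClosed_closedBall.isComplete (convex_closedBall p R)
  refine ⟨R, hR, |C|, abs_nonneg C, f ∘ ρ, fun x hx => (hRsub hx).2,
    fun x hx => congrArg f (hρid hx).symm,
    hf.comp_continuous hρ.continuous fun x => (hRsub (hρmem x)).2, fun x y => ?_⟩
  have hdist : dist (ρ x) (ρ y) ≤ dist x y := by simpa using hρ.dist_le_mul x y
  calc D (f (ρ x)) (f (ρ y)) ≤ C * dist (ρ x) (ρ y) ^ γ :=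
        hC _ (hRsub (hρmem x)) _ (hRsub (hρmem y))
    _ ≤ |C| * dist x y ^ γ := by gcongr; exact le_abs_self C

end LocalHolder

section Sewing

lemma two_mul_half_mul_rpow {d : ℝ} (hd : 0 ≤ d) (β : ℝ) :
    2 * (1 / 2 * d) ^ β = 2 ^ (1 - β) * d ^ β := by
  rw [Real.mul_rpow (by norm_num) hd, Real.rpow_sub two_pos, Real.rpow_one, one_div,
    Real.inv_rpow zero_le_two, div_eq_mul_inv, mul_assoc]

lemma two_rpow_one_sub_lt_one {β : ℝ} (hβ : 1 < β) : (2 : ℝ) ^ (1 - β) < 1 :=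
  Real.rpow_lt_one_of_one_lt_of_neg one_lt_two (by linarith)

variable {E : Type*} [NormedAddCommGroup E] [NormedSpace ℝ E] {s : Set E} {φ : E → E → ℝ}
  {β ρ δ A C : ℝ}

/- Halving a pair `N` times replaces the crude coefficient `A` by `A * (2 ^ (1 - ρ)) ^ N`, while the
midpoint defects add up to a geometric series of ratio `2 ^ (1 - β)`. -/
lemma le_of_forall_le_midpoint_add_iterate (hs : Convex ℝ s) (hβ : 1 < β) (hC : 0 ≤ C)
    (hmid : ∀ x ∈ s, ∀ y ∈ s,
      φ x y ≤ φ x (midpoint ℝ x y) + φ (midpoint ℝ x y) y + C * dist x y ^ β)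
    (hlin : ∀ x ∈ s, ∀ y ∈ s, φ x y ≤ δ * dist x y + A * dist x y ^ ρ) (N : ℕ) :
    ∀ x ∈ s, ∀ y ∈ s, φ x y ≤ δ * dist x y + A * (2 ^ (1 - ρ)) ^ N * dist x y ^ ρ +
      C / (1 - 2 ^ (1 - β)) * dist x y ^ β := by
  have hθ : 0 < 1 - (2 : ℝ) ^ (1 - β) := sub_pos.2 (two_rpow_one_sub_lt_one hβ)
  induction N with
  | zero =>
    intro x hx y hy
    have : 0 ≤ C / (1 - 2 ^ (1 - β)) * dist x y ^ β := by positivity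
    simpa using (hlin x hx y hy).trans (le_add_of_nonneg_right this)
  | succ N ih =>
    intro x hx y hy
    have hw : midpoint ℝ x y ∈ s := hs.midpoint_mem hx hy
    have hxw : dist x (midpoint ℝ x y) = 1 / 2 * dist x y := by
      rw [dist_left_midpoint]; norm_num
    have hwy : dist (midpoint ℝ x y) y = 1 / 2 * dist x y := by
      rw [dist_midpoint_right]; norm_num
    have hfst := ih x hx _ hw
    have hsnd := ih _ hw y hy
    rw [hxw] at hfst
    rw [hwy] at hsnd
    have hgeom : C / (1 - 2 ^ (1 - β)) * 2 ^ (1 - β) + C = C / (1 - 2 ^ (1 - β)) := by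
      field_simp
      ring
    calc φ x y ≤ φ x (midpoint ℝ x y) + φ (midpoint ℝ x y) y + C * dist x y ^ β :=
          hmid x hx y hy
      _ ≤ δ * dist x y + A * (2 ^ (1 - ρ)) ^ N * (2 * (1 / 2 * dist x y) ^ ρ) +
            (C / (1 - 2 ^ (1 - β)) * (2 * (1 / 2 * dist x y) ^ β) + C * dist x y ^ β) := by
          linarith
      _ = δ * dist x y + A * (2 ^ (1 - ρ)) ^ (N + 1) * dist x y ^ ρ +
            (C / (1 - 2 ^ (1 - β)) * 2 ^ (1 - β) + C) * dist x y ^ β := by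
          rw [two_mul_half_mul_rpow dist_nonneg, two_mul_half_mul_rpow dist_nonneg]
          ring
      _ = _ := by rw [hgeom]

lemma le_of_forall_le_midpoint_add (hs : Convex ℝ s) (hβ : 1 < β) (hρ : 1 < ρ) (hC : 0 ≤ C)
    (hmid : ∀ x ∈ s, ∀ y ∈ s,
      φ x y ≤ φ x (midpoint ℝ x y) + φ (midpoint ℝ x y) y + C * dist x y ^ β)
    (hlin : ∀ x ∈ s, ∀ y ∈ s, φ x y ≤ δ * dist x y + A * dist x y ^ ρ)
    {x y : E} (hx : x ∈ s) (hy : y ∈ s) :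
    φ x y ≤ δ * dist x y + C / (1 - 2 ^ (1 - β)) * dist x y ^ β := by
  have hpow : Tendsto (fun N : ℕ => ((2 : ℝ) ^ (1 - ρ)) ^ N) atTop (𝓝 0) :=
    tendsto_pow_atTop_nhds_zero_of_lt_one (by positivity) (two_rpow_one_sub_lt_one hρ)
  have hlim := (((hpow.const_mul A).mul_const (dist x y ^ ρ)).const_add
    (δ * dist x y)).add_const (C / (1 - 2 ^ (1 - β)) * dist x y ^ β)
  simp only [mul_zero, zero_mul, add_zero] at hlim
  exact ge_of_tendsto' hlim fun N =>
    le_of_forall_le_midpoint_add_iterate hs hβ hC hmid hlin N x hx y hy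

end Sewing

section Mollifier

lemma convolution_eq_of_eqOn_ball {E F : Type*} [SeminormedAddCommGroup E]
    [MeasurableSpace E] {μ : Measure E} [NormedAddCommGroup F] [NormedSpace ℝ F] {ψ : E → ℝ}
    {f g : E → F} {x : E} {ε : ℝ} (hψ : Function.support ψ ⊆ ball 0 ε)
    (h : EqOn f g (ball x ε)) :
    (ψ ⋆[.lsmul ℝ ℝ, μ] f) x = (ψ ⋆[.lsmul ℝ ℝ, μ] g) x := by
  rw [convolution_def, convolution_def]
  congr 1 with z
  by_cases hz : ψ z = 0
  · simp [hz]
  · rw [h (by simpa [dist_eq_norm] using hψ hz)]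

variable {E F G : Type*} [NormedAddCommGroup E] [NormedSpace ℝ E] [NormedAddCommGroup F]
  [NormedSpace ℝ F] [NormedAddCommGroup G] [NormedSpace ℝ G] {ψ η : E → ℝ} {ε : ℝ} {f : E → F}
  {x y : E}

lemma support_subset_ball_of_subset_closedBall {F : Type*} [TopologicalSpace F] [T1Space F]
    [Zero F] {f : E → F} (hf : Continuous f) {c : E} {r : ℝ} (hr : r ≠ 0)
    (h : Function.support f ⊆ closedBall c r) : Function.support f ⊆ ball c r :=
  interior_closedBall c hr ▸ interior_maximal h hf.isOpen_support

/-- The kernel `η_ε(z) = ε^{-d} η(z / ε)`, where `d` is the dimension of the space. -/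
noncomputable def rescale (η : E → ℝ) (ε : ℝ) (z : E) : ℝ :=
  (ε ^ Module.finrank ℝ E)⁻¹ * η (ε⁻¹ • z)

lemma norm_fderiv_rescale (hε : 0 < ε) (z : E) :
    ‖fderiv ℝ (rescale η ε) z‖ =
      (ε ^ Module.finrank ℝ E)⁻¹ * (ε⁻¹ * ‖fderiv ℝ η (ε⁻¹ • z)‖) := by
  have h : rescale η ε = (ε ^ Module.finrank ℝ E)⁻¹ • fun z => η (ε⁻¹ • z) := rfl
  rw [h, fderiv_const_smul_field, Pi.smul_apply, fderiv_comp_smul, norm_smul, norm_smul,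
    Real.norm_of_nonneg (by positivity), Real.norm_of_nonneg (by positivity)]

variable [MeasurableSpace E] {μ : Measure E}

/-- A `C^1` mollifier at scale `ε`: a `C^1` probability density with respect to `μ`, supported in
the ball of radius `ε`. The open ball loses no generality against the closed one because the support
of a continuous function is open. -/
structure IsMollifier (μ : Measure E) (ε : ℝ) (ψ : E → ℝ) : Prop where
  contDiff : ContDiff ℝ 1 ψ
  support_subset : Function.support ψ ⊆ ball 0 ε
  nonneg : ∀ z, 0 ≤ ψ z
  integral_eq_one : ∫ z, ψ z ∂μ = 1

namespace IsMollifier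

lemma pos (hψ : IsMollifier μ ε ψ) : 0 < ε := by
  by_contra! hε
  have hzero : ψ = 0 := by
    simpa [ball_eq_empty.2 hε, Function.support_eq_empty_iff] using hψ.support_subset
  simpa [hzero] using hψ.integral_eq_one

lemma integrable (hψ : IsMollifier μ ε ψ) : Integrable ψ μ :=
  integrable_of_integral_eq_one hψ.integral_eq_one

lemma convolution_const [CompleteSpace F] (hψ : IsMollifier μ ε ψ) (c : F) :
    (ψ ⋆[.lsmul ℝ ℝ, μ] fun _ => c) = fun _ => c := by
  ext x
  simp [convolution_def, integral_smul_const, hψ.integral_eq_one]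

lemma support_fderiv_subset (hψ : IsMollifier μ ε ψ) :
    Function.support (fderiv ℝ ψ) ⊆ ball 0 ε :=
  support_subset_ball_of_subset_closedBall (hψ.contDiff.continuous_fderiv one_ne_zero) hψ.pos.ne'
    ((_root_.support_fderiv_subset ℝ).trans
      (closure_minimal (hψ.support_subset.trans ball_subset_closedBall) isClosed_closedBall))

variable [FiniteDimensional ℝ E]

lemma hasCompactSupport (hψ : IsMollifier μ ε ψ) : HasCompactSupport ψ :=
  .of_support_subset_isCompact (isCompact_closedBall 0 ε)
    (hψ.support_subset.trans ball_subset_closedBall)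

variable [BorelSpace E] [μ.IsAddHaarMeasure]

lemma integrable_fderiv (hψ : IsMollifier μ ε ψ) : Integrable (fderiv ℝ ψ) μ :=
  (hψ.contDiff.continuous_fderiv one_ne_zero).integrable_of_hasCompactSupport
    (hψ.hasCompactSupport.fderiv ℝ)

lemma convolutionExists (hψ : IsMollifier μ ε ψ) (hf : Continuous f) :
    ConvolutionExists ψ f (.lsmul ℝ ℝ) μ :=
  hψ.hasCompactSupport.convolutionExists_left _ hψ.contDiff.continuous hf.locallyIntegrable

lemma contDiff_convolution (hψ : IsMollifier μ ε ψ) (hf : Continuous f) :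
    ContDiff ℝ 1 (ψ ⋆[.lsmul ℝ ℝ, μ] f) :=
  hψ.hasCompactSupport.contDiff_convolution_left (n := 1) _ hψ.contDiff hf.locallyIntegrable

lemma map_convolution [CompleteSpace F] [CompleteSpace G] (hψ : IsMollifier μ ε ψ)
    (hf : Continuous f) (T : F →L[ℝ] G) (x : E) :
    T ((ψ ⋆[.lsmul ℝ ℝ, μ] f) x) = (ψ ⋆[.lsmul ℝ ℝ, μ] fun z => T (f z)) x := by
  rw [convolution_def, ← T.integral_comp_comm (hψ.convolutionExists hf x), convolution_def]
  simp only [ContinuousLinearMap.lsmul_apply, map_smul]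

lemma comp_fderiv_convolution [CompleteSpace F] [CompleteSpace G] (hψ : IsMollifier μ ε ψ)
    (hf : Continuous f) (T : F →L[ℝ] G) (x : E) :
    T ∘L fderiv ℝ (ψ ⋆[.lsmul ℝ ℝ, μ] f) x =
      fderiv ℝ (ψ ⋆[.lsmul ℝ ℝ, μ] fun z => T (f z)) x := by
  have hdiff := (hψ.contDiff_convolution hf).differentiable one_ne_zero x
  rw [← funext (hψ.map_convolution hf T)]
  exact (T.hasFDerivAt.comp x hdiff.hasFDerivAt).fderiv.symm

lemma dist_convolution_le [CompleteSpace F] (hψ : IsMollifier μ ε ψ) (hf : Continuous f) {c : F}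
    {M : ℝ} (hM : 0 ≤ M) (h : ∀ q ∈ ball x ε, dist (f q) c ≤ M) :
    dist ((ψ ⋆[.lsmul ℝ ℝ, μ] f) x) c ≤ M :=
  _root_.MeasureTheory.dist_convolution_le hM hψ.support_subset hψ.nonneg hψ.integral_eq_one
    hf.aestronglyMeasurable h

lemma dist_convolution_convolution_le (hψ : IsMollifier μ ε ψ) (hf : Continuous f) {M : ℝ}
    (h : ∀ z, dist (f (x - z)) (f (y - z)) ≤ M) :
    dist ((ψ ⋆[.lsmul ℝ ℝ, μ] f) x) ((ψ ⋆[.lsmul ℝ ℝ, μ] f) y) ≤ M := by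
  rw [dist_eq_norm, convolution_def, convolution_def,
    ← integral_sub (hψ.convolutionExists hf x) (hψ.convolutionExists hf y)]
  calc ‖∫ z, ψ z • f (x - z) - ψ z • f (y - z) ∂μ‖ ≤ ∫ z, ψ z * M ∂μ := by
        refine norm_integral_le_of_norm_le (hψ.integrable.mul_const M) (.of_forall fun z => ?_)
        rw [← smul_sub, norm_smul, Real.norm_of_nonneg (hψ.nonneg z), ← dist_eq_norm]
        exact mul_le_mul_of_nonneg_left (h z) (hψ.nonneg z)
    _ = M := by rw [integral_mul_const, hψ.integral_eq_one, one_mul]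

lemma integral_precompL_fderiv [CompleteSpace F] (hψ : IsMollifier μ ε ψ) (c : F) :
    ∫ z, (ContinuousLinearMap.lsmul ℝ ℝ).precompL E (fderiv ℝ ψ z) c ∂μ = 0 := by
  have hderiv := hψ.hasCompactSupport.hasFDerivAt_convolution_left (.lsmul ℝ ℝ) hψ.contDiff
    (continuous_const (y := c)).locallyIntegrable (0 : E) (μ := μ)
  rw [hψ.convolution_const] at hderiv
  exact hderiv.unique (hasFDerivAt_const c 0)

lemma norm_fderiv_convolution_le [CompleteSpace F] (hψ : IsMollifier μ ε ψ) (hf : Continuous f)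
    {c : F} {M : ℝ} (hM : 0 ≤ M) (h : ∀ q ∈ ball x ε, dist (f q) c ≤ M) :
    ‖fderiv ℝ (ψ ⋆[.lsmul ℝ ℝ, μ] f) x‖ ≤ M * ∫ z, ‖fderiv ℝ ψ z‖ ∂μ := by
  have hdist := dist_convolution_le' ((ContinuousLinearMap.lsmul ℝ ℝ).precompL E) hM
    hψ.integrable_fderiv hψ.support_fderiv_subset hf.aestronglyMeasurable h
  rw [hψ.integral_precompL_fderiv, dist_zero_right,
    ← (hψ.hasCompactSupport.hasFDerivAt_convolution_left (.lsmul ℝ ℝ) hψ.contDiff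
      hf.locallyIntegrable x).fderiv] at hdist
  calc _ ≤ _ := hdist
    _ ≤ 1 * (∫ z, ‖fderiv ℝ ψ z‖ ∂μ) * M := by
        gcongr
        exact (ContinuousLinearMap.norm_precompL_le E _).trans ContinuousLinearMap.opNorm_lsmul_le
    _ = _ := by ring

end IsMollifier

variable [FiniteDimensional ℝ E] [BorelSpace E] [μ.IsAddHaarMeasure]

lemma IsMollifier.isMollifier_rescale (hη : IsMollifier μ 1 η) (hε : 0 < ε) :
    IsMollifier μ ε (rescale η ε) where
  contDiff := contDiff_const.mul (hη.contDiff.comp (contDiff_const_smul _))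
  support_subset := fun z hz => by
    have h : ε⁻¹ • z ∈ ball (0 : E) 1 := hη.support_subset (right_ne_zero_of_mul hz)
    rw [mem_ball_zero_iff, norm_smul, norm_inv, Real.norm_of_nonneg hε.le,
      inv_mul_lt_one₀ hε] at h
    simpa using h
  nonneg := fun z => mul_nonneg (by positivity) (hη.nonneg _)
  integral_eq_one := by
    simp only [rescale]
    rw [integral_const_mul, Measure.integral_comp_inv_smul, hη.integral_eq_one]
    simp [abs_of_pos hε, hε.ne']

lemma integral_norm_fderiv_rescale (hε : 0 < ε) :
    ∫ z, ‖fderiv ℝ (rescale η ε) z‖ ∂μ = ε⁻¹ * ∫ z, ‖fderiv ℝ η z‖ ∂μ := by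
  simp only [norm_fderiv_rescale hε, integral_const_mul]
  rw [Measure.integral_comp_inv_smul_of_nonneg μ (fun z => ‖fderiv ℝ η z‖) hε.le, smul_eq_mul]
  field_simp

lemma IsMollifier.tendsto_convolution_rescale [CompleteSpace F] (hη : IsMollifier μ 1 η)
    (hf : Continuous f) (x : E) :
    Tendsto (fun ε => (rescale η ε ⋆[.lsmul ℝ ℝ, μ] f) x) (𝓝[>] 0) (𝓝 (f x)) := by
  rw [Metric.tendsto_nhds]
  intro δ hδ
  obtain ⟨r, hr, h⟩ := Metric.continuousAt_iff.1 hf.continuousAt (δ / 2) (half_pos hδ)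
  filter_upwards [Ioo_mem_nhdsGT hr] with ε hε
  exact ((hη.isMollifier_rescale hε.1).dist_convolution_le hf (half_pos hδ).le fun q hq =>
    (h ((mem_ball.1 hq).trans hε.2)).le).trans_lt (half_lt_self hδ)

end Mollifier

section ContactForm

variable {n : ℕ}

/-- The projection `π : ℝ^{2n+1} → ℝ^{2n}` onto the first `2n` coordinates. -/
noncomputable def horizontalProj (n : ℕ) :
    EuclideanSpace ℝ (Fin (2 * n + 1)) →L[ℝ] EuclideanSpace ℝ (Fin (2 * n)) :=
  LinearMap.toContinuousLinearMap
    { toFun := fun p => WithLp.toLp 2 fun i => p i.castSucc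
      map_add' := fun _ _ => rfl
      map_smul' := fun _ _ => rfl }

/-- The standard symplectic form `ω(a, b) = ∑_j (a_{x_j} b_{y_j} - a_{y_j} b_{x_j})` on `ℝ^{2n}`. -/
noncomputable def symplecticForm (n : ℕ) :
    EuclideanSpace ℝ (Fin (2 * n)) →L[ℝ] EuclideanSpace ℝ (Fin (2 * n)) →L[ℝ] ℝ :=
  let x (j : Fin n) : Fin (2 * n) := ⟨2 * j.1, by omega⟩
  let y (j : Fin n) : Fin (2 * n) := ⟨2 * j.1 + 1, by omega⟩
  ∑ j, ((EuclideanSpace.proj (x j)).smulRight (EuclideanSpace.proj (y j)) -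
    (EuclideanSpace.proj (y j)).smulRight (EuclideanSpace.proj (x j)))

/-- The contact form `α` at the point `a`, as a linear functional. The number
`contactForm n a (b - a)` is the `t`-coordinate of `a⁻¹ * b` in the Heisenberg group. -/
noncomputable def contactForm (n : ℕ) (a : EuclideanSpace ℝ (Fin (2 * n + 1))) :
    EuclideanSpace ℝ (Fin (2 * n + 1)) →L[ℝ] ℝ :=
  EuclideanSpace.proj (tI n) + (2 : ℝ) • symplecticForm n (horizontalProj n a) ∘L horizontalProj n

variable {a b c : EuclideanSpace ℝ (Fin (2 * n + 1))}

lemma horizontalProj_apply (i : Fin (2 * n)) : horizontalProj n a i = a i.castSucc := rfl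

lemma contactForm_apply : contactForm n a b =
    b (tI n) + 2 * ∑ j, (a (xI n j) * b (yI n j) - a (yI n j) * b (xI n j)) := by
  simp [contactForm, symplecticForm, horizontalProj_apply, xI, yI]

lemma edistProj_eq_norm_sub :
    edistProj n a b = ‖horizontalProj n a - horizontalProj n b‖ := by
  simp [edistProj, EuclideanSpace.norm_eq, horizontalProj_apply]

lemma contactForm_sub_contactForm : contactForm n a - contactForm n b =
    (2 : ℝ) • symplecticForm n (horizontalProj n a - horizontalProj n b) ∘L horizontalProj n := by
  simp only [contactForm, map_sub, ContinuousLinearMap.sub_comp, smul_sub]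
  abel

lemma norm_contactForm_sub_comp_le {E : Type*} [NormedAddCommGroup E] [NormedSpace ℝ E]
    (T : E →L[ℝ] EuclideanSpace ℝ (Fin (2 * n + 1))) :
    ‖(contactForm n a - contactForm n b) ∘L T‖ ≤
      2 * ‖symplecticForm n‖ * edistProj n a b * ‖horizontalProj n ∘L T‖ := by
  rw [contactForm_sub_contactForm, ContinuousLinearMap.smul_comp, ContinuousLinearMap.comp_assoc,
    norm_smul, Real.norm_two, edistProj_eq_norm_sub]
  calc _ ≤ 2 * (‖symplecticForm n (horizontalProj n a - horizontalProj n b)‖ *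
        ‖horizontalProj n ∘L T‖) := by gcongr; exact ContinuousLinearMap.opNorm_comp_le _ _
    _ ≤ 2 * (‖symplecticForm n‖ * ‖horizontalProj n a - horizontalProj n b‖ *
        ‖horizontalProj n ∘L T‖) := by gcongr; exact ContinuousLinearMap.le_opNorm _ _
    _ = _ := by ring

lemma norm_contactForm_comp_le_add {E : Type*} [NormedAddCommGroup E] [NormedSpace ℝ E]
    (T : E →L[ℝ] EuclideanSpace ℝ (Fin (2 * n + 1))) :
    ‖contactForm n a ∘L T‖ ≤ ‖contactForm n b ∘L T‖ +
      2 * ‖symplecticForm n‖ * edistProj n a b * ‖horizontalProj n ∘L T‖ := by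
  rw [← add_sub_cancel (contactForm n b) (contactForm n a), ContinuousLinearMap.add_comp]
  exact norm_add_le_of_le le_rfl (norm_contactForm_sub_comp_le T)

lemma abs_contactForm_sub_apply_le : |contactForm n a (c - b)| ≤ |contactForm n b (c - b)| +
      2 * ‖symplecticForm n‖ * edistProj n a b * edistProj n c b := by
  have h := norm_contactForm_comp_le_add (a := a) (b := b) (.toSpanSingleton ℝ (c - b))
  simpa [ContinuousLinearMap.comp_toSpanSingleton, edistProj_eq_norm_sub (a := c)] using h

/- `contactForm n c (a - c)` is the `t`-coordinate of `c⁻¹ * a = (c⁻¹ * b) * (b⁻¹ * a)`, and the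
`t`-coordinate is additive up to the symplectic form of the horizontal parts. -/
lemma abs_contactForm_sub_le_add : |contactForm n c (a - c)| ≤
    |contactForm n b (a - b)| + |contactForm n c (b - c)| +
      2 * ‖symplecticForm n‖ * edistProj n c b * edistProj n a b := by
  rw [← sub_add_sub_cancel a b c, map_add]
  linarith [abs_add_le (contactForm n c (a - b)) (contactForm n c (b - c)),
    abs_contactForm_sub_apply_le (a := c) (b := b) (c := a)]

lemma continuous_contactForm_sub : Continuous
    fun q : EuclideanSpace ℝ (Fin (2 * n + 1)) × EuclideanSpace ℝ (Fin (2 * n + 1)) =>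
      contactForm n q.2 (q.1 - q.2) := by
  unfold contactForm
  fun_prop

lemma dK_nonneg_s7 : 0 ≤ dK n a b := by
  rw [dK]
  positivity

lemma edistProj_nonneg : 0 ≤ edistProj n a b :=
  Real.sqrt_nonneg _

lemma dK_pow_four : dK n a b ^ 4 = edistProj n a b ^ 4 + contactForm n b (a - b) ^ 2 := by
  have ht : contactForm n b (a - b) = a (tI n) - b (tI n) +
      2 * ∑ j, (b (xI n j) * a (yI n j) - a (xI n j) * b (yI n j)) := by
    rw [contactForm_apply, PiLp.sub_apply]
    congr 2
    exact Finset.sum_congr rfl fun j _ => by simp only [PiLp.sub_apply]; ring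
  have hz : edistProj n a b ^ 4 = (∑ i : Fin (2 * n), (a i.castSucc - b i.castSucc) ^ 2) ^ 2 := by
    rw [edistProj, pow_mul _ 2 2, Real.sq_sqrt (by positivity)]
  rw [ht, hz, dK, ← Real.rpow_mul_natCast (by positivity)]
  norm_num

lemma edistProj_le_dK : edistProj n a b ≤ dK n a b := by
  rw [← pow_le_pow_iff_left₀ edistProj_nonneg dK_nonneg_s7 four_ne_zero, dK_pow_four]
  exact le_add_of_nonneg_right (sq_nonneg _)

lemma abs_contactForm_sub_le_dK_sq : |contactForm n b (a - b)| ≤ dK n a b ^ 2 := by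
  refine abs_le_of_sq_le_sq ?_ (sq_nonneg _)
  rw [← pow_mul, dK_pow_four]
  exact le_add_of_nonneg_left (by positivity [edistProj_nonneg (a := a) (b := b)])

lemma dK_le_edistProj_add_sqrt :
    dK n a b ≤ edistProj n a b + √|contactForm n b (a - b)| := by
  have hsum := add_nonneg (edistProj_nonneg (a := a) (b := b))
    (Real.sqrt_nonneg |contactForm n b (a - b)|)
  rw [← pow_le_pow_iff_left₀ dK_nonneg_s7 hsum four_ne_zero, dK_pow_four]
  calc _ = edistProj n a b ^ 4 + √|contactForm n b (a - b)| ^ 4 := by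
        rw [pow_mul (√_) 2 2, Real.sq_sqrt (abs_nonneg _), sq_abs]
    _ ≤ _ := pow_add_pow_le edistProj_nonneg (Real.sqrt_nonneg _) four_ne_zero

/-- The pullback `g^*α` at `p`, as a linear functional. -/
noncomputable def contactPullback {E : Type*} [NormedAddCommGroup E] [NormedSpace ℝ E] (n : ℕ)
    (g : E → EuclideanSpace ℝ (Fin (2 * n + 1))) (p : E) : E →L[ℝ] ℝ :=
  contactForm n (g p) ∘L fderiv ℝ g p

lemma norm_pullA {m : ℕ} {g : EuclideanSpace ℝ (Fin m) → EuclideanSpace ℝ (Fin (2 * n + 1))}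
    {p : EuclideanSpace ℝ (Fin m)} (hg : DifferentiableAt ℝ g p) :
    ‖pullA n m g p‖ = ‖contactPullback n g p‖ := by
  have hcoord : ∀ i, gradient (fun q => g q i) p =
      (InnerProductSpace.toDual ℝ _).symm (EuclideanSpace.proj i ∘L fderiv ℝ g p) := fun i => by
    rw [gradient, ((EuclideanSpace.proj i).hasFDerivAt.comp p hg.hasFDerivAt).fderiv.symm]
    rfl
  have hdual : pullA n m g p =
      (InnerProductSpace.toDual ℝ _).symm (contactPullback n g p) := by
    simp only [pullA, hcoord, ← map_smul, ← map_sub, ← map_sum, ← map_add]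
    congr 1
    ext v
    simp [contactPullback, contactForm_apply]
  rw [hdual, LinearIsometryEquiv.norm_map]

end ContactForm

lemma rpow_two_mul_eq_sq {d : ℝ} (hd : 0 ≤ d) (γ : ℝ) : d ^ (2 * γ) = (d ^ γ) ^ 2 := by
  rw [mul_comm, Real.rpow_mul hd, Real.rpow_two]

section ForwardEstimate

variable {n : ℕ} {E : Type*} [NormedAddCommGroup E] [NormedSpace ℝ E] [FiniteDimensional ℝ E]
  [MeasurableSpace E] [BorelSpace E] {μ : Measure E} [μ.IsAddHaarMeasure] {ψ η : E → ℝ}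
  {g : E → EuclideanSpace ℝ (Fin (2 * n + 1))} {ε γ C : ℝ}

/- The constant `g p` may be subtracted from `g` before differentiating the convolution, so only the
increments of `g` inside the ball enter. -/
lemma IsMollifier.norm_contactPullback_convolution_le (hψ : IsMollifier μ ε ψ) (hg : Continuous g)
    {p : E} {M M' : ℝ} (hM : 0 ≤ M) (hM' : 0 ≤ M')
    (hπ : ∀ q ∈ ball p ε, edistProj n (g q) (g p) ≤ M)
    (hα : ∀ q ∈ ball p ε, |contactForm n (g p) (g q - g p)| ≤ M') :
    ‖contactPullback n (ψ ⋆[.lsmul ℝ ℝ, μ] g) p‖ ≤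
      (M' + 2 * ‖symplecticForm n‖ * M ^ 2) * ∫ z, ‖fderiv ℝ ψ z‖ ∂μ := by
  have hπg : Continuous fun q => horizontalProj n (g q) := by fun_prop
  have hαg : Continuous fun q => contactForm n (g p) (g q) := by fun_prop
  have hπ' : ∀ q ∈ ball p ε, dist (horizontalProj n (g q)) (horizontalProj n (g p)) ≤ M :=
    fun q hq => by rw [dist_eq_norm, ← edistProj_eq_norm_sub]; exact hπ q hq
  have hα' : ∀ q ∈ ball p ε, dist (contactForm n (g p) (g q)) (contactForm n (g p) (g p)) ≤ M' :=
    fun q hq => by rw [Real.dist_eq, ← map_sub]; exact hα q hq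
  have hvalue : edistProj n ((ψ ⋆[.lsmul ℝ ℝ, μ] g) p) (g p) ≤ M := by
    rw [edistProj_eq_norm_sub, ← dist_eq_norm, hψ.map_convolution hg]
    exact hψ.dist_convolution_le hπg hM hπ'
  have hhoriz := hψ.norm_fderiv_convolution_le hπg hM hπ'
  have hcontact := hψ.norm_fderiv_convolution_le hαg hM' hα'
  rw [← hψ.comp_fderiv_convolution hg] at hhoriz hcontact
  calc ‖contactPullback n (ψ ⋆[.lsmul ℝ ℝ, μ] g) p‖
      ≤ M' * (∫ z, ‖fderiv ℝ ψ z‖ ∂μ) +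
          2 * ‖symplecticForm n‖ * M * (M * ∫ z, ‖fderiv ℝ ψ z‖ ∂μ) :=
        (norm_contactForm_comp_le_add _).trans (by gcongr)
    _ = _ := by ring

lemma IsMollifier.norm_contactPullback_convolution_rescale_le (hη : IsMollifier μ 1 η)
    (hg : Continuous g) (hγ : 0 ≤ γ) (hC : 0 ≤ C)
    (h : ∀ x y, dK n (g x) (g y) ≤ C * dist x y ^ γ) (hε : 0 < ε) (p : E) :
    ‖contactPullback n (rescale η ε ⋆[.lsmul ℝ ℝ, μ] g) p‖ ≤
      (1 + 2 * ‖symplecticForm n‖) * C ^ 2 * (∫ z, ‖fderiv ℝ η z‖ ∂μ) * ε ^ (2 * γ - 1) := by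
  have hdK : ∀ q ∈ ball p ε, dK n (g q) (g p) ≤ C * ε ^ γ := fun q hq =>
    (h q p).trans (by gcongr; exact (mem_ball.1 hq).le)
  have hbound := (hη.isMollifier_rescale hε).norm_contactPullback_convolution_le hg
    (M := C * ε ^ γ) (M' := (C * ε ^ γ) ^ 2) (by positivity) (by positivity)
    (fun q hq => edistProj_le_dK.trans (hdK q hq))
    (fun q hq => abs_contactForm_sub_le_dK_sq.trans (pow_le_pow_left₀ dK_nonneg_s7 (hdK q hq) 2))
  rw [integral_norm_fderiv_rescale hε] at hbound
  rw [Real.rpow_sub_one hε.ne', rpow_two_mul_eq_sq hε.le, div_eq_mul_inv]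
  exact hbound.trans_eq (by ring)

lemma IsMollifier.tendstoUniformly_contactPullback_convolution_rescale (hη : IsMollifier μ 1 η)
    (hg : Continuous g) (hγ : 1 / 2 < γ) (hC : 0 ≤ C)
    (h : ∀ x y, dK n (g x) (g y) ≤ C * dist x y ^ γ) :
    TendstoUniformly (fun ε => contactPullback n (rescale η ε ⋆[.lsmul ℝ ℝ, μ] g)) 0 (𝓝[>] 0) := by
  have hexp : 0 < 2 * γ - 1 := by linarith
  have hpow : Tendsto (fun ε : ℝ => (1 + 2 * ‖symplecticForm n‖) * C ^ 2 *
      (∫ z, ‖fderiv ℝ η z‖ ∂μ) * ε ^ (2 * γ - 1)) (𝓝[>] 0) (𝓝 0) := by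
    have := ((Real.continuousAt_rpow_const 0 _ (.inr hexp.le)).tendsto.const_mul
      ((1 + 2 * ‖symplecticForm n‖) * C ^ 2 * ∫ z, ‖fderiv ℝ η z‖ ∂μ)).mono_left
        (nhdsWithin_le_nhds (s := Ioi 0))
    rwa [Real.zero_rpow hexp.ne', mul_zero] at this
  rw [Metric.tendstoUniformly_iff]
  intro δ hδ
  filter_upwards [hpow.eventually_lt_const hδ, self_mem_nhdsWithin] with ε hε hε₀ p
  rw [Pi.zero_apply, dist_zero_left]
  exact (hη.norm_contactPullback_convolution_rescale_le hg (by linarith) hC h hε₀ p).trans_lt hε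

end ForwardEstimate

section BackwardEstimate

variable {n : ℕ} {E : Type*} [NormedAddCommGroup E] [NormedSpace ℝ E]
  {g : E → EuclideanSpace ℝ (Fin (2 * n + 1))} {s : Set E} {x y : E} {γ δ C L : ℝ}

lemma abs_contactForm_sub_le_add_mul_rpow_one_add (hs : Convex ℝ s) (hg : Differentiable ℝ g)
    (hγ : 0 ≤ γ) (hC : 0 ≤ C)
    (hπ : ∀ x ∈ s, ∀ y ∈ s, edistProj n (g x) (g y) ≤ C * dist x y ^ γ)
    (hα : ∀ x ∈ s, ‖contactPullback n g x‖ ≤ δ)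
    (hL : ∀ x ∈ s, ‖horizontalProj n ∘L fderiv ℝ g x‖ ≤ L) (hx : x ∈ s) (hy : y ∈ s) :
    |contactForm n (g y) (g x - g y)| ≤
      δ * dist x y + 2 * ‖symplecticForm n‖ * C * L * dist x y ^ (1 + γ) := by
  have hsub : segment ℝ y x ⊆ s := hs.segment_subset hy hx
  have hderiv : ∀ q ∈ segment ℝ y x, HasFDerivWithinAt (fun q => contactForm n (g y) (g q))
      (contactForm n (g y) ∘L fderiv ℝ g q) (segment ℝ y x) q := fun q _ =>
    ((contactForm n (g y)).hasFDerivAt.comp q (hg q).hasFDerivAt).hasFDerivWithinAt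
  have hbound : ∀ q ∈ segment ℝ y x, ‖contactForm n (g y) ∘L fderiv ℝ g q‖ ≤
      δ + 2 * ‖symplecticForm n‖ * (C * dist x y ^ γ) * L := fun q hq => by
    have hqy : edistProj n (g y) (g q) ≤ C * dist x y ^ γ := by
      refine (hπ y hy q (hsub hq)).trans ?_
      gcongr
      rw [dist_comm x y]
      linarith [dist_add_dist_of_mem_segment hq, dist_nonneg (x := q) (y := x)]
    have hLq := hL q (hsub hq)
    have hαq := hα q (hsub hq)
    rw [contactPullback] at hαq
    exact (norm_contactForm_comp_le_add (b := g q) _).trans (by gcongr)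
  have hmvt := (convex_segment y x).norm_image_sub_le_of_norm_hasFDerivWithin_le hderiv hbound
    (left_mem_segment ℝ y x) (right_mem_segment ℝ y x)
  rw [map_sub, ← Real.norm_eq_abs]
  refine hmvt.trans_eq ?_
  rw [← dist_eq_norm, Real.rpow_one_add' dist_nonneg (by linarith)]
  ring

lemma abs_contactForm_sub_le_midpoint_add (hs : Convex ℝ s) (hγ : 0 ≤ γ) (hC : 0 ≤ C)
    (hπ : ∀ x ∈ s, ∀ y ∈ s, edistProj n (g x) (g y) ≤ C * dist x y ^ γ) (hx : x ∈ s) (hy : y ∈ s) :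
    |contactForm n (g y) (g x - g y)| ≤
      |contactForm n (g (midpoint ℝ x y)) (g x - g (midpoint ℝ x y))| +
        |contactForm n (g y) (g (midpoint ℝ x y) - g y)| +
        2 * ‖symplecticForm n‖ * C ^ 2 * dist x y ^ (2 * γ) := by
  set w := midpoint ℝ x y
  have hw : w ∈ s := hs.midpoint_mem hx hy
  have hxw : edistProj n (g x) (g w) ≤ C * dist x y ^ γ := by
    refine (hπ x hx w hw).trans ?_
    gcongr
    rw [dist_left_midpoint, Real.norm_two]
    linarith [dist_nonneg (x := x) (y := y)]
  have hyw : edistProj n (g y) (g w) ≤ C * dist x y ^ γ := by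
    refine (hπ y hy w hw).trans ?_
    gcongr
    rw [dist_right_midpoint, Real.norm_two]
    linarith [dist_nonneg (x := x) (y := y)]
  refine abs_contactForm_sub_le_add.trans (add_le_add_right ?_ _)
  calc 2 * ‖symplecticForm n‖ * edistProj n (g y) (g w) * edistProj n (g x) (g w)
      ≤ 2 * ‖symplecticForm n‖ * (C * dist x y ^ γ) * (C * dist x y ^ γ) := by
        gcongr
        exact edistProj_nonneg
    _ = _ := by rw [rpow_two_mul_eq_sq dist_nonneg]; ring

lemma abs_contactForm_sub_le_of_norm_contactPullback_le (hs : Convex ℝ s) (hg : ContDiff ℝ 1 g)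
    (hγ : 1 / 2 < γ) (hC : 0 ≤ C)
    (hπ : ∀ x ∈ s, ∀ y ∈ s, edistProj n (g x) (g y) ≤ C * dist x y ^ γ)
    (hα : ∀ x ∈ s, ‖contactPullback n g x‖ ≤ δ) (hx : x ∈ s) (hy : y ∈ s) :
    |contactForm n (g y) (g x - g y)| ≤ δ * dist x y +
      2 * ‖symplecticForm n‖ * C ^ 2 / (1 - 2 ^ (1 - 2 * γ)) * dist x y ^ (2 * γ) := by
  have hsub : segment ℝ x y ⊆ s := hs.segment_subset hx hy
  have hcont : Continuous fun q => horizontalProj n ∘L fderiv ℝ g q :=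
    continuous_const.clm_comp (hg.continuous_fderiv one_ne_zero)
  have hcompact : IsCompact (segment ℝ x y) := by
    rw [← convexHull_pair]
    exact (toFinite {x, y}).isCompact_convexHull ℝ
  obtain ⟨L, hL⟩ := hcompact.exists_bound_of_continuousOn hcont.continuousOn
  have hπ' : ∀ u ∈ segment ℝ x y, ∀ v ∈ segment ℝ x y,
      edistProj n (g u) (g v) ≤ C * dist u v ^ γ := fun u hu v hv => hπ u (hsub hu) v (hsub hv)
  exact le_of_forall_le_midpoint_add (φ := fun u v => |contactForm n (g v) (g u - g v)|)
    (ρ := 1 + γ) (convex_segment x y) (by linarith) (by linarith) (by positivity)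
    (fun u hu v hv => abs_contactForm_sub_le_midpoint_add (convex_segment x y) (by linarith) hC
      hπ' hu hv)
    (fun u hu v hv => abs_contactForm_sub_le_add_mul_rpow_one_add (convex_segment x y)
      (hg.differentiable one_ne_zero) (by linarith) hC hπ' (fun q hq => hα q (hsub hq)) hL hu hv)
    (left_mem_segment ℝ x y) (right_mem_segment ℝ x y)

lemma abs_contactForm_sub_le_of_tendsto {ι : Type*} {l : Filter ι} [l.NeBot]
    {F : ι → E → EuclideanSpace ℝ (Fin (2 * n + 1))} (hs : Convex ℝ s) (hγ : 1 / 2 < γ)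
    (hC : 0 ≤ C) (hF : ∀ᶠ i in l, ContDiff ℝ 1 (F i))
    (hπ : ∀ᶠ i in l, ∀ x ∈ s, ∀ y ∈ s, edistProj n (F i x) (F i y) ≤ C * dist x y ^ γ)
    (hα : TendstoUniformlyOn (fun i => contactPullback n (F i)) 0 l s)
    (hlim : ∀ x ∈ s, Tendsto (fun i => F i x) l (𝓝 (g x))) (hx : x ∈ s) (hy : y ∈ s) :
    |contactForm n (g y) (g x - g y)| ≤
      2 * ‖symplecticForm n‖ * C ^ 2 / (1 - 2 ^ (1 - 2 * γ)) * dist x y ^ (2 * γ) := by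
  have hφ : Tendsto (fun i => |contactForm n (F i y) (F i x - F i y)|) l
      (𝓝 |contactForm n (g y) (g x - g y)|) :=
    ((continuous_contactForm_sub.tendsto (g x, g y)).comp
      ((hlim x hx).prodMk_nhds (hlim y hy))).abs
  have hδ : ∀ δ > 0, |contactForm n (g y) (g x - g y)| ≤ δ * dist x y +
      2 * ‖symplecticForm n‖ * C ^ 2 / (1 - 2 ^ (1 - 2 * γ)) * dist x y ^ (2 * γ) := fun δ hδ => by
    refine le_of_tendsto hφ ?_
    filter_upwards [hF, hπ, SeminormedAddGroup.tendstoUniformlyOn_zero.1 hα δ hδ] with i hFi hπi hαi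
    exact abs_contactForm_sub_le_of_norm_contactPullback_le hs hFi hγ hC hπi
      (fun q hq => (hαi q hq).le) hx hy
  have hzero : Tendsto (fun δ : ℝ => δ * dist x y + 2 * ‖symplecticForm n‖ * C ^ 2 /
      (1 - 2 ^ (1 - 2 * γ)) * dist x y ^ (2 * γ)) (𝓝[>] 0)
      (𝓝 (0 * dist x y + 2 * ‖symplecticForm n‖ * C ^ 2 /
        (1 - 2 ^ (1 - 2 * γ)) * dist x y ^ (2 * γ))) :=
    ((continuous_id.mul continuous_const).add continuous_const).continuousWithinAt.tendsto
  rw [zero_mul, zero_add] at hzero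
  exact ge_of_tendsto hzero (eventually_mem_nhdsWithin.mono hδ)

variable [FiniteDimensional ℝ E] [MeasurableSpace E] [BorelSpace E] {μ : Measure E}
  [μ.IsAddHaarMeasure] {η : E → ℝ}

lemma IsMollifier.exists_forall_dK_le_of_tendstoUniformlyOn (hη : IsMollifier μ 1 η)
    (hg : Continuous g) (hs : Convex ℝ s) (hγ : 1 / 2 < γ) (hC : 0 ≤ C)
    (hπ : ∀ x y, edistProj n (g x) (g y) ≤ C * dist x y ^ γ)
    (hα : TendstoUniformlyOn (fun ε => contactPullback n (rescale η ε ⋆[.lsmul ℝ ℝ, μ] g)) 0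
      (𝓝[>] 0) s) :
    ∃ C', ∀ x ∈ s, ∀ y ∈ s, dK n (g x) (g y) ≤ C' * dist x y ^ γ := by
  have hmollifier : ∀ᶠ ε in 𝓝[>] 0, IsMollifier μ ε (rescale η ε) :=
    eventually_mem_nhdsWithin.mono fun ε hε => hη.isMollifier_rescale hε
  have hπε : ∀ᶠ ε in 𝓝[>] 0, ∀ x ∈ s, ∀ y ∈ s, edistProj n ((rescale η ε ⋆[.lsmul ℝ ℝ, μ] g) x)
      ((rescale η ε ⋆[.lsmul ℝ ℝ, μ] g) y) ≤ C * dist x y ^ γ := by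
    filter_upwards [hmollifier] with ε hψ x _ y _
    rw [edistProj_eq_norm_sub, ← dist_eq_norm, hψ.map_convolution hg, hψ.map_convolution hg]
    refine hψ.dist_convolution_convolution_le (by fun_prop) fun z => ?_
    rw [dist_eq_norm, ← edistProj_eq_norm_sub]
    simpa using hπ (x - z) (y - z)
  refine ⟨C + √(2 * ‖symplecticForm n‖ * C ^ 2 / (1 - 2 ^ (1 - 2 * γ))), fun x hx y hy => ?_⟩
  have hcontact := abs_contactForm_sub_le_of_tendsto hs hγ hC
    (hmollifier.mono fun ε hψ => hψ.contDiff_convolution hg) hπε hα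
    (fun x _ => hη.tendsto_convolution_rescale hg x) hx hy
  have hsqrt : √(dist x y ^ (2 * γ)) = dist x y ^ γ := by
    rw [rpow_two_mul_eq_sq dist_nonneg, Real.sqrt_sq (by positivity)]
  calc dK n (g x) (g y)
      ≤ C * dist x y ^ γ + √(2 * ‖symplecticForm n‖ * C ^ 2 / (1 - 2 ^ (1 - 2 * γ)) *
          dist x y ^ (2 * γ)) :=
        dK_le_edistProj_add_sqrt.trans (add_le_add (hπ x y) (Real.sqrt_le_sqrt hcontact))
    _ = _ := by rw [Real.sqrt_mul' _ (by positivity), hsqrt, add_mul]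

end BackwardEstimate

section Localization

variable {m n : ℕ} {η : EuclideanSpace ℝ (Fin m) → ℝ} {p q : EuclideanSpace ℝ (Fin m)} {R ε : ℝ}

lemma mollify_eq_convolution {d : ℕ} {f : EuclideanSpace ℝ (Fin m) → EuclideanSpace ℝ (Fin d)} :
    mollify m d η ε f = rescale η ε ⋆[.lsmul ℝ ℝ] f := by
  ext1 p
  simp [mollify, rescale, convolution_def]

variable {f g : EuclideanSpace ℝ (Fin m) → EuclideanSpace ℝ (Fin (2 * n + 1))}

lemma IsMollifier.norm_pullA_mollify (hη : IsMollifier volume 1 η) (hg : Continuous g)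
    (hfg : EqOn f g (closedBall p R)) (hε : ε ∈ Ioo 0 (R / 2)) (hq : q ∈ ball p (R / 2)) :
    ‖pullA n m (mollify m (2 * n + 1) η ε f) q‖ =
      ‖contactPullback n (rescale η ε ⋆[.lsmul ℝ ℝ] g) q‖ := by
  have hψ := hη.isMollifier_rescale hε.1
  have heq : mollify m (2 * n + 1) η ε f =ᶠ[𝓝 q] rescale η ε ⋆[.lsmul ℝ ℝ] g := by
    filter_upwards [isOpen_ball.mem_nhds hq] with w hw
    rw [mollify_eq_convolution]
    refine convolution_eq_of_eqOn_ball hψ.support_subset (hfg.mono ?_)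
    exact (ball_subset_ball' (by linarith [hε.2, mem_ball.1 hw])).trans ball_subset_closedBall
  have hdiff := (hψ.contDiff_convolution hg).differentiable one_ne_zero q
  rw [norm_pullA (heq.differentiableAt_iff.2 hdiff), contactPullback, contactPullback,
    heq.eq_of_nhds, heq.fderiv_eq]

lemma IsMollifier.tendstoUniformlyOn_pullA_mollify_iff (hη : IsMollifier volume 1 η)
    (hg : Continuous g) (hR : 0 < R) (hfg : EqOn f g (closedBall p R)) :
    TendstoUniformlyOn (fun ε => pullA n m (mollify m (2 * n + 1) η ε f)) 0 (𝓝[>] 0)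
        (ball p (R / 2)) ↔
      TendstoUniformlyOn (fun ε => contactPullback n (rescale η ε ⋆[.lsmul ℝ ℝ] g)) 0 (𝓝[>] 0)
        (ball p (R / 2)) := by
  rw [SeminormedAddGroup.tendstoUniformlyOn_zero, SeminormedAddGroup.tendstoUniformlyOn_zero]
  refine forall₂_congr fun δ _ => eventually_congr ?_
  filter_upwards [Ioo_mem_nhdsGT (half_pos hR)] with ε hε
  exact forall₂_congr fun q hq => by rw [hη.norm_pullA_mollify hg hfg hε hq]

end Localization

lemma tendstoUniformlyOn_zero_nhdsGT_iff {X F : Type*} [SeminormedAddCommGroup F]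
    {G : ℝ → X → F} {K : Set X} :
    TendstoUniformlyOn G 0 (𝓝[>] 0) K ↔ ∀ δ : ℝ, 0 < δ → ∃ ε₀ : ℝ, 0 < ε₀ ∧
      ∀ ε : ℝ, 0 < ε → ε < ε₀ → ∀ p ∈ K, ‖G ε p‖ ≤ δ := by
  simp only [SeminormedAddGroup.tendstoUniformlyOn_zero, (nhdsGT_basis (0 : ℝ)).eventually_iff,
    mem_Ioo, and_imp]
  constructor
  · intro h δ hδ
    obtain ⟨ε₀, hε₀, hG⟩ := h δ hδ
    exact ⟨ε₀, hε₀, fun ε hε hlt p hp => (hG hε hlt p hp).le⟩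
  · intro h δ hδ
    obtain ⟨ε₀, hε₀, hG⟩ := h (δ / 2) (half_pos hδ)
    exact ⟨ε₀, hε₀, fun ε hε hlt p hp => (hG ε hε hlt p hp).trans_lt (half_lt_self hδ)⟩

theorem stmt7_general (m n : ℕ) (γ : ℝ) (hγ : 1 / 2 < γ) (Ω : Set (EuclideanSpace ℝ (Fin m)))
    (hΩ : IsOpen Ω) (f : EuclideanSpace ℝ (Fin m) → EuclideanSpace ℝ (Fin (2 * n + 1)))
    (hf : ContinuousOn f Ω) (η : EuclideanSpace ℝ (Fin m) → ℝ) (hη₁ : ContDiff ℝ 1 η)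
    (hη₂ : Function.support η ⊆ closedBall 0 1) (hη₃ : ∀ z, 0 ≤ η z) (hη₄ : ∫ z, η z = 1) :
    LocallyHolderOn (dK n) γ f Ω ↔ LocallyHolderOn (edistProj n) γ f Ω ∧
      TendstoLocallyUniformlyOn (fun ε => pullA n m (mollify m (2 * n + 1) η ε f)) 0 (𝓝[>] 0)
        Ω := by
  have hη : IsMollifier volume 1 η :=
    ⟨hη₁, support_subset_ball_of_subset_closedBall hη₁.continuous one_ne_zero hη₂, hη₃, hη₄⟩
  have hγ₀ : 0 ≤ γ := by linarith
  constructor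
  · refine fun h => ⟨h.mono_dist fun _ _ => edistProj_le_dK, fun u hu p hp => ?_⟩
    obtain ⟨R, hR, C, hC, g, -, hfg, hg, hgC⟩ := h.exists_continuous_extension hγ₀ hΩ hf hp
    have hunif := (hη.tendstoUniformly_contactPullback_convolution_rescale hg hγ hC
      hgC).tendstoUniformlyOn (s := ball p (R / 2))
    exact ⟨ball p (R / 2), mem_nhdsWithin_of_mem_nhds (ball_mem_nhds p (half_pos hR)),
      (hη.tendstoUniformlyOn_pullA_mollify_iff hg hR hfg).2 hunif u hu⟩
  · rintro ⟨hπ, hα⟩ p hp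
    obtain ⟨R, hR, C, hC, g, hRΩ, hfg, hg, hgC⟩ := hπ.exists_continuous_extension hγ₀ hΩ hf hp
    have hball : ball p (R / 2) ⊆ closedBall p R := (ball_subset_ball (half_le_self hR.le)).trans
      ball_subset_closedBall
    have hunif := ((tendstoLocallyUniformlyOn_iff_forall_isCompact hΩ).1 hα _ hRΩ
      (isCompact_closedBall p R)).mono hball
    obtain ⟨C', hC'⟩ := hη.exists_forall_dK_le_of_tendstoUniformlyOn hg (convex_ball p (R / 2)) hγ
      hC hgC ((hη.tendstoUniformlyOn_pullA_mollify_iff hg hR hfg).1 hunif)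
    refine ⟨R / 2, half_pos hR, C', fun x hx y hy => ?_⟩
    rw [hfg (hball hx.1), hfg (hball hy.1)]
    exact hC' x hx.1 y hy.1

/-- Theorem 8.1 of the paper. A continuous map `f : Ω → ℝ^{2n+1}`,
`1/2 < γ ≤ 1`, is locally `γ`-Hölder into `ℍ^n` iff (a) its projection onto the first `2n`
coordinates is locally `γ`-Hölder and (b) `f_ε^*α → 0` uniformly on compact subsets of `Ω`. -/
theorem stmt7 (m n : ℕ) (γ : ℝ) (hγ : 1/2 < γ) (hγ1 : γ ≤ 1)
    (Ω : Set (EuclideanSpace ℝ (Fin m))) (hΩ : IsOpen Ω)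
    (f : EuclideanSpace ℝ (Fin m) → EuclideanSpace ℝ (Fin (2*n+1)))
    (hf : ContinuousOn f Ω)
    (η : EuclideanSpace ℝ (Fin m) → ℝ)
    (hη₁ : ContDiff ℝ (⊤ : ℕ∞) η) (hη₂ : Function.support η ⊆ closedBall 0 1)
    (hη₃ : ∀ z, 0 ≤ η z) (hη₄ : ∫ z, η z = 1) :
    (∀ p ∈ Ω, ∃ r : ℝ, 0 < r ∧ ∃ C : ℝ, ∀ x ∈ ball p r ∩ Ω, ∀ y ∈ ball p r ∩ Ω,
        dK n (f x) (f y) ≤ C * dist x y ^ γ)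
    ↔
    ((∀ p ∈ Ω, ∃ r : ℝ, 0 < r ∧ ∃ C : ℝ, ∀ x ∈ ball p r ∩ Ω, ∀ y ∈ ball p r ∩ Ω,
        edistProj n (f x) (f y) ≤ C * dist x y ^ γ) ∧
     (∀ K : Set (EuclideanSpace ℝ (Fin m)), K ⊆ Ω → IsCompact K →
        ∀ δ : ℝ, 0 < δ → ∃ ε₀ : ℝ, 0 < ε₀ ∧ ∀ ε : ℝ, 0 < ε → ε < ε₀ →
          ∀ p ∈ K, ‖pullA n m (mollify m (2*n+1) η ε f) p‖ ≤ δ)) := by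
  simpa only [LocallyHolderOn, tendstoLocallyUniformlyOn_iff_forall_isCompact hΩ,
    tendstoUniformlyOn_zero_nhdsGT_iff] using
    stmt7_general m n γ hγ Ω hΩ f hf η (hη₁.of_le (by exact_mod_cast le_top)) hη₂ hη₃ hη₄
end
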